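/- Let p ≥ 6, u = 2^(1−p), and let o_x, o_y be real numbers in [1, 1/(8u) − 2]. Let x_h, x_l, y_h, y_l ∈ F_p satisfy |x_l| ≤ o_x·u·|x_h| and |y_l| ≤ o_y·u·|y_h|, and put o = max(o_x, o_y). Then in any execution of sloppy double-word addition in faithful rounding, the intermediate value w satisfies |w| ≤ (o + 2)·u·(|x_h| + |y_h|). -/

import Mathlib

/-!
The bound follows from a first-order error analysis plus one exactness fact.

Every faithful rounding has relative error at most `u = 2 ^ (1 - p)`, because each real number lies
between two consecutive floating-point numbers whose distance is at most `u` times its absolute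
value (`exists_bracket`). Writing `e₁, …, e₅` for the errors committed in computing
`sh, a', b', da, db`, one has `da + db = -e₁ - e₃ + e₄ + e₅`. With `T = u * (|xh| + |yh|)`, the
error `e₁` is at most `T`, while `e₄` and `e₅` are second order, being roundings of
`xh - a' = -(e₁ + e₂)` and `yh - b' = e₂ - e₃`. The remaining term `e₃` is a rounding error of
`sh - a'`, which is close to `yh`:

* if `|yh| ≤ |xh|`, then `e₃` is at most about `T / 2`;
* if `|xh| ≤ |yh|`, then `sh - yh` is a floating-point number (`sub_exact`, a consequence of
  Sterbenz's lemma), so `a' = sh - yh`, hence `sh - a' = yh` and `e₃ = 0`.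

In both cases `|sl| ≤ 1.7 * T`. Since `|v| ≤ (1 + u) * o * T` with `o = max ox oy`, and `o` is at
most `1 / (8 * u) - 2`, the two roundings producing `v` and `w` cost little enough for
`|w| ≤ (o + 2) * T`.
-/

/-- The radix-2, precision-`p` floating-point numbers with unlimited exponent range. -/
def Fp (p : ℕ) : Set ℝ := {x : ℝ | ∃ M e : ℤ, |M| ≤ 2 ^ p - 1 ∧ x = (M : ℝ) * (2 : ℝ) ^ e}

/-- Round toward `-∞`: the largest floating-point number `≤ x`. -/
noncomputable def RD (p : ℕ) (x : ℝ) : ℝ := sSup {f : ℝ | f ∈ Fp p ∧ f ≤ x}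

/-- Round toward `+∞`: the smallest floating-point number `≥ x`. -/
noncomputable def RU (p : ℕ) (x : ℝ) : ℝ := sInf {f : ℝ | f ∈ Fp p ∧ x ≤ f}

/-- `y` is a faithful rounding of `x`. -/
def Faithful (p : ℕ) (x y : ℝ) : Prop := y = RD p x ∨ y = RU p x

/-- All hypotheses of one execution of the sloppy double-word addition algorithm
(`2Sum(x_h,y_h)`, `v = ∘(x_l+y_l)`, `w = ∘(s_l+v)`, `Fast2Sum(s_h,w)`) in faithful
rounding, each rounding chosen independently. -/
def SloppyFaithful (p : ℕ) (xh xl yh yl sh a' b' da db sl v w zh d zl : ℝ) : Prop :=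
  Faithful p (xh + yh) sh ∧ Faithful p (sh - yh) a' ∧ Faithful p (sh - a') b' ∧
  Faithful p (xh - a') da ∧ Faithful p (yh - b') db ∧ Faithful p (da + db) sl ∧
  Faithful p (xl + yl) v ∧ Faithful p (sl + v) w ∧
  Faithful p (sh + w) zh ∧ Faithful p (zh - sh) d ∧ Faithful p (w - d) zl

lemma Fp_neg {p : ℕ} {x : ℝ} (hx : x ∈ Fp p) : -x ∈ Fp p := by
  obtain ⟨M, e, hM, rfl⟩ := hx
  exact ⟨-M, e, by rwa [abs_neg], by push_cast; ring⟩

lemma Fp_mul_zpow {p : ℕ} {x : ℝ} (hx : x ∈ Fp p) (k : ℤ) : x * (2 : ℝ) ^ k ∈ Fp p := by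
  obtain ⟨M, e, hM, rfl⟩ := hx
  exact ⟨M, e + k, hM, by rw [zpow_add₀ (by norm_num)]; ring⟩

/-- Sterbenz's lemma, in a form insensitive to signs: the exact difference is a multiple of the
finer of the two quanta, and is no larger than the operand having that quantum. -/
lemma sterbenz {p : ℕ} {a b : ℝ} (ha : a ∈ Fp p) (hb : b ∈ Fp p)
    (h1 : |a - b| ≤ |a|) (h2 : |a - b| ≤ |b|) : a - b ∈ Fp p := by
  have key : ∀ {a b : ℝ} (M e N f : ℤ), |M| ≤ 2 ^ p - 1 → a = M * (2 : ℝ) ^ e →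
      b = N * (2 : ℝ) ^ f → e ≤ f → |a - b| ≤ |a| → a - b ∈ Fp p := by
    intro a b M e N f hM ha hb hef h
    obtain ⟨n, rfl⟩ := Int.le.dest hef
    have hpos : (0 : ℝ) < (2 : ℝ) ^ e := by positivity
    have hab : a - b = ((M - N * 2 ^ n : ℤ) : ℝ) * (2 : ℝ) ^ e := by
      rw [ha, hb, zpow_add₀ (by norm_num), zpow_natCast]; push_cast; ring
    refine ⟨M - N * 2 ^ n, e, le_trans ?_ hM, hab⟩
    rw [hab, ha, abs_mul, abs_mul, abs_of_pos hpos] at h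
    exact_mod_cast le_of_mul_le_mul_right h hpos
  obtain ⟨M, e, hM, ha'⟩ := ha
  obtain ⟨N, f, hN, hb'⟩ := hb
  rcases le_total e f with hef | hef
  · exact key M e N f hM ha' hb' hef h1
  · rw [abs_sub_comm] at h2
    simpa using Fp_neg (key N f M e hN hb' ha' hef h2)

/-- Every real number lies between two consecutive floating-point numbers (or is one itself), at
relative distance at most `2 ^ (1 - p)`. -/
lemma exists_bracket {p : ℕ} (hp : 1 ≤ p) (x : ℝ) :
    ∃ f g : ℝ, f ∈ Fp p ∧ g ∈ Fp p ∧ f ≤ x ∧ x ≤ g ∧ g - f ≤ (2 : ℝ) ^ (1 - (p : ℤ)) * |x| ∧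
      ∀ h ∈ Fp p, h ≤ f ∨ g ≤ h := by
  have pos : ∀ x : ℝ, 0 < x →
      ∃ f g : ℝ, f ∈ Fp p ∧ g ∈ Fp p ∧ f ≤ x ∧ x ≤ g ∧ g - f ≤ (2 : ℝ) ^ (1 - (p : ℤ)) * |x| ∧
      ∀ h ∈ Fp p, h ≤ f ∨ g ≤ h := by
    intro x hx
    obtain ⟨q, rfl⟩ : ∃ q, p = q + 1 := ⟨p - 1, by omega⟩
    obtain ⟨n, hn1, hn2⟩ := exists_mem_Ico_zpow hx (one_lt_two : (1 : ℝ) < 2)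
    -- `x` lies in the binade of `2 ^ n = 2 ^ q * 2 ^ k`, where the spacing is `2 ^ k`.
    obtain ⟨k, rfl⟩ : ∃ k : ℤ, n = q + k := ⟨n - q, by ring⟩
    have hk : (0 : ℝ) < (2 : ℝ) ^ k := by positivity
    rw [zpow_add₀ (by norm_num), zpow_natCast] at hn1
    rw [show (q : ℤ) + k + 1 = ((q + 1 : ℕ) : ℤ) + k by push_cast; ring,
      zpow_add₀ (by norm_num), zpow_natCast] at hn2
    set m : ℤ := ⌊x / (2 : ℝ) ^ k⌋ with hm
    have hm1 : (m : ℝ) * 2 ^ k ≤ x := (le_div_iff₀ hk).1 (Int.floor_le _)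
    have hm2 : x < (m + 1 : ℝ) * 2 ^ k := (div_lt_iff₀ hk).1 (Int.lt_floor_add_one _)
    have hmq : (2 : ℤ) ^ q ≤ m := by
      rw [hm, Int.le_floor, le_div_iff₀ hk]; exact_mod_cast hn1
    have hmp : m < 2 ^ (q + 1) := by
      rw [hm, Int.floor_lt, div_lt_iff₀ hk]; exact_mod_cast hn2
    have hq : (0 : ℤ) < 2 ^ q := by positivity
    refine ⟨m * 2 ^ k, (m + 1) * 2 ^ k, ⟨m, k, ?_, rfl⟩, ?_, hm1, hm2.le, ?_, ?_⟩
    · rw [abs_of_pos (by omega)]; omega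
    · rcases eq_or_lt_of_le (Int.add_one_le_iff.2 hmp) with h | h
      · refine ⟨1, ((q + 1 : ℕ) : ℤ) + k, ?_, ?_⟩
        · rw [abs_one, pow_succ]; omega
        · rw [zpow_add₀ (by norm_num), zpow_natCast]
          have : (m + 1 : ℝ) = 2 ^ (q + 1) := by exact_mod_cast h
          rw [this]; push_cast; ring
      · exact ⟨m + 1, k, by rw [abs_of_pos (by omega)]; omega, by push_cast; ring⟩
    · rw [abs_of_pos hx]
      have h2q : (0 : ℝ) < 2 ^ q := by positivity
      have : (2 : ℝ) ^ (1 - ((q + 1 : ℕ) : ℤ)) = (2 ^ q)⁻¹ := by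
        rw [show 1 - ((q + 1 : ℕ) : ℤ) = -(q : ℤ) by push_cast; ring, zpow_neg, zpow_natCast]
      rw [this, inv_mul_eq_div, le_div_iff₀ h2q]
      linarith
    · rintro h ⟨M, e, hM, rfl⟩
      rcases le_or_gt k e with hke | hke
      · obtain ⟨j, rfl⟩ := Int.le.dest hke
        rw [zpow_add₀ (by norm_num), zpow_natCast]
        have hMe : (M : ℝ) * (2 ^ k * 2 ^ j) = ((M * 2 ^ j : ℤ) : ℝ) * 2 ^ k := by
          push_cast; ring
        rw [hMe]
        rcases le_or_gt (M * 2 ^ j) m with h | h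
        · left
          exact mul_le_mul_of_nonneg_right (by exact_mod_cast h) hk.le
        · right
          exact mul_le_mul_of_nonneg_right (by exact_mod_cast h) hk.le
      · left
        -- A quantum finer than `2 ^ k` only reaches numbers below the binade of `x`.
        have he : (2 : ℝ) ^ e * 2 ≤ 2 ^ k := by
          rw [← zpow_add_one₀ (by norm_num)]
          exact zpow_le_zpow_right₀ (by norm_num) (by omega)
        have hMr : (M : ℝ) ≤ 2 ^ q * 2 := by
          have : M ≤ 2 ^ q * 2 := by rw [pow_succ] at hM; have := le_abs_self M; omega
          exact_mod_cast this
        have hmr : (2 : ℝ) ^ q ≤ m := by exact_mod_cast hmq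
        calc (M : ℝ) * 2 ^ e ≤ (2 ^ q * 2) * 2 ^ e := by gcongr
          _ = 2 ^ q * (2 ^ e * 2) := by ring
          _ ≤ m * 2 ^ k := by gcongr
  rcases lt_trichotomy x 0 with hx | rfl | hx
  · obtain ⟨f, g, hf, hg, h1, h2, h3, h4⟩ := pos (-x) (by linarith)
    refine ⟨-g, -f, Fp_neg hg, Fp_neg hf, by linarith, by linarith, ?_, ?_⟩
    · rw [abs_neg] at h3; linarith
    · intro h hh
      rcases h4 _ (Fp_neg hh) with h | h
      · right; linarith
      · left; linarith
  · have h0 : (0 : ℝ) ∈ Fp p := ⟨0, 0, by simpa using one_le_pow₀ (by norm_num), by simp⟩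
    exact ⟨0, 0, h0, h0, le_rfl, le_rfl, by simp, fun h _ => le_total h 0⟩
  · exact pos x hx

lemma RD_isGreatest {p : ℕ} (hp : 1 ≤ p) (x : ℝ) :
    IsGreatest {f : ℝ | f ∈ Fp p ∧ f ≤ x} (RD p x) := by
  obtain ⟨f, g, hf, hg, h1, h2, -, h4⟩ := exists_bracket hp x
  suffices ∃ r, IsGreatest {f : ℝ | f ∈ Fp p ∧ f ≤ x} r by
    obtain ⟨r, hr⟩ := this
    rw [RD, hr.csSup_eq]; exact hr
  rcases eq_or_lt_of_le h2 with h | h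
  · exact ⟨g, ⟨hg, h.ge⟩, fun y hy => hy.2.trans h2⟩
  · exact ⟨f, ⟨hf, h1⟩, fun y hy => (h4 y hy.1).resolve_right (by linarith [hy.2])⟩

lemma RU_isLeast {p : ℕ} (hp : 1 ≤ p) (x : ℝ) :
    IsLeast {f : ℝ | f ∈ Fp p ∧ x ≤ f} (RU p x) := by
  obtain ⟨f, g, hf, hg, h1, h2, -, h4⟩ := exists_bracket hp x
  suffices ∃ r, IsLeast {f : ℝ | f ∈ Fp p ∧ x ≤ f} r by
    obtain ⟨r, hr⟩ := this
    rw [RU, hr.csInf_eq]; exact hr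
  rcases eq_or_lt_of_le h1 with h | h
  · exact ⟨f, ⟨hf, h.ge⟩, fun y hy => h1.trans hy.2⟩
  · exact ⟨g, ⟨hg, h2⟩, fun y hy => (h4 y hy.1).resolve_left (by linarith [hy.2])⟩

lemma Faithful.mem {p : ℕ} (hp : 1 ≤ p) {x y : ℝ} (h : Faithful p x y) : y ∈ Fp p := by
  rcases h with rfl | rfl
  · exact (RD_isGreatest hp x).1.1
  · exact (RU_isLeast hp x).1.1

lemma Faithful.le_of_le {p : ℕ} (hp : 1 ≤ p) {x y f : ℝ} (h : Faithful p x y) (hf : f ∈ Fp p)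
    (hfx : f ≤ x) : f ≤ y := by
  rcases h with rfl | rfl
  · exact (RD_isGreatest hp x).2 ⟨hf, hfx⟩
  · exact hfx.trans (RU_isLeast hp x).1.2

lemma Faithful.ge_of_ge {p : ℕ} (hp : 1 ≤ p) {x y f : ℝ} (h : Faithful p x y) (hf : f ∈ Fp p)
    (hfx : x ≤ f) : y ≤ f := by
  rcases h with rfl | rfl
  · exact (RD_isGreatest hp x).1.2.trans hfx
  · exact (RU_isLeast hp x).2 ⟨hf, hfx⟩

lemma Faithful.eq_of_mem {p : ℕ} (hp : 1 ≤ p) {x y : ℝ} (h : Faithful p x y) (hx : x ∈ Fp p) :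
    y = x :=
  le_antisymm (h.ge_of_ge hp hx le_rfl) (h.le_of_le hp hx le_rfl)

lemma Faithful.abs_sub_le {p : ℕ} (hp : 1 ≤ p) {x y : ℝ} (h : Faithful p x y) :
    |y - x| ≤ (2 : ℝ) ^ (1 - (p : ℤ)) * |x| := by
  obtain ⟨f, g, hf, hg, h1, h2, h3, -⟩ := exists_bracket hp x
  have := h.le_of_le hp hf h1
  have := h.ge_of_ge hp hg h2
  rw [abs_le]; constructor <;> linarith

/-- The first subtraction of `2Sum` is exact when its second input dominates. Either `y / 2` and
`2 * y` enclose `x + y`, hence also `s`, and Sterbenz's lemma applies to `s - y`; or `x` is so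
close to `-y` that it applies to `x + y`, whence `s - y = x`. -/
lemma sub_exact {p : ℕ} (hp : 1 ≤ p) {x y s : ℝ} (hx : x ∈ Fp p) (hy : y ∈ Fp p)
    (hxy : |x| ≤ |y|) (hs : Faithful p (x + y) s) : s - y ∈ Fp p := by
  have hhalf : y / 2 ∈ Fp p := by
    simpa [div_eq_mul_inv] using Fp_mul_zpow hy (-1)
  have hdouble : 2 * y ∈ Fp p := by
    simpa [mul_comm] using Fp_mul_zpow hy 1
  have cancel : |x + y| ≤ |x| → |x + y| ≤ |y| → s - y ∈ Fp p := by
    intro h1 h2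
    have hmem : x + y ∈ Fp p := by
      simpa using sterbenz hx (Fp_neg hy) (by simpa using h1) (by simpa using h2)
    rw [hs.eq_of_mem hp hmem]
    simpa using hx
  rcases le_total 0 y with h0 | h0
  · rw [abs_of_nonneg h0, abs_le] at hxy
    rcases le_total (y / 2) (x + y) with h | h
    · have h1 := hs.le_of_le hp hhalf h
      have h2 := hs.ge_of_ge hp hdouble (by linarith)
      apply sterbenz (hs.mem hp) hy
      · rw [abs_of_nonneg (show 0 ≤ s by linarith), abs_le]; constructor <;> linarith
      · rw [abs_of_nonneg h0, abs_le]; constructor <;> linarith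
    · apply cancel
      · rw [abs_of_nonpos (show x ≤ 0 by linarith), abs_le]; constructor <;> linarith
      · rw [abs_of_nonneg h0, abs_le]; constructor <;> linarith
  · rw [abs_of_nonpos h0, abs_le] at hxy
    rcases le_total (x + y) (y / 2) with h | h
    · have h1 := hs.ge_of_ge hp hhalf h
      have h2 := hs.le_of_le hp hdouble (by linarith)
      apply sterbenz (hs.mem hp) hy
      · rw [abs_of_nonpos (show s ≤ 0 by linarith), abs_le]; constructor <;> linarith
      · rw [abs_of_nonpos h0, abs_le]; constructor <;> linarith
    · apply cancel
      · rw [abs_of_nonneg (show 0 ≤ x by linarith), abs_le]; constructor <;> linarith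
      · rw [abs_of_nonpos h0, abs_le]; constructor <;> linarith

/-- The low word delivered by `2Sum` under faithful rounding is at most `1.7 * u * (|x| + |y|)`. -/
lemma twoSum_low_bound {p : ℕ} (hp : 1 ≤ p) {u : ℝ} (hu : u = (2 : ℝ) ^ (1 - (p : ℤ)))
    (hu32 : u ≤ 1 / 32) {x y s a b da db sl : ℝ} (hx : x ∈ Fp p) (hy : y ∈ Fp p)
    (hs : Faithful p (x + y) s) (ha : Faithful p (s - y) a) (hb : Faithful p (s - a) b)
    (hda : Faithful p (x - a) da) (hdb : Faithful p (y - b) db)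
    (hsl : Faithful p (da + db) sl) : |sl| ≤ 1.7 * (u * (|x| + |y|)) := by
  have hu0 : 0 < u := by rw [hu]; positivity
  have k1 := hs.abs_sub_le hp
  have k2 := ha.abs_sub_le hp
  have k3 := hb.abs_sub_le hp
  have k4 := hda.abs_sub_le hp
  have k5 := hdb.abs_sub_le hp
  have k6 := hsl.abs_sub_le hp
  rw [← hu] at k1 k2 k3 k4 k5 k6
  obtain ⟨T, hT⟩ : ∃ T, T = u * (|x| + |y|) := ⟨_, rfl⟩
  rw [← hT]
  have hT0 : 0 ≤ T := by rw [hT]; positivity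
  have hx0 : 0 ≤ u * |x| := by positivity
  have hy0 : 0 ≤ u * |y| := by positivity
  have hTs : T = u * |x| + u * |y| := by rw [hT]; ring
  -- Each further rounding error gains a factor `u ≤ 1 / 32`.
  have small : ∀ t c : ℝ, |t| ≤ c → u * |t| ≤ c / 32 := by
    intro t c h
    have := mul_le_mul hu32 h (abs_nonneg t) (by norm_num)
    linarith
  have e1 : |s - (x + y)| ≤ T := by
    refine k1.trans ?_
    rw [hT]; gcongr; exact abs_add_le x y
  have e2 : |a - (s - y)| ≤ 33 / 32 * T := by
    have h : |s - y| ≤ |x| + |s - (x + y)| := by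
      have := abs_add_le x (s - (x + y)); rwa [show x + (s - (x + y)) = s - y by ring] at this
    have := mul_le_mul_of_nonneg_left h hu0.le
    have := small _ _ e1
    linarith
  have e3 : |b - (s - a)| ≤ 1 / 2 * T + 33 / 1024 * T := by
    rcases le_total |x| |y| with hxy | hxy
    · have ea : a = s - y := ha.eq_of_mem hp (sub_exact hp hx hy hxy hs)
      have eb : b = s - a := hb.eq_of_mem hp (by rw [ea]; simpa using hy)
      rw [eb, sub_self, abs_zero]; positivity
    · have h : |s - a| ≤ |y| + |a - (s - y)| := by
        have := abs_sub y (a - (s - y)); rwa [show y - (a - (s - y)) = s - a by ring] at this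
      have := mul_le_mul_of_nonneg_left h hu0.le
      have := mul_le_mul_of_nonneg_left hxy hu0.le
      have := small _ _ e2
      linarith
  have e4 : |da - (x - a)| ≤ (65 / 32 * T) / 32 := by
    refine k4.trans (small _ _ ?_)
    rw [abs_le] at e1 e2 ⊢; constructor <;> linarith [e1.1, e1.2, e2.1, e2.2]
  have e5 : |db - (y - b)| ≤ (33 / 32 * T + (1 / 2 * T + 33 / 1024 * T)) / 32 := by
    refine k5.trans (small _ _ ?_)
    rw [abs_le] at e2 e3 ⊢; constructor <;> linarith [e2.1, e2.2, e3.1, e3.2]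
  have hsum : |da + db| ≤ 1.6447 * T := by
    rw [abs_le] at e1 e3 e4 e5 ⊢
    constructor <;> linarith [e1.1, e1.2, e3.1, e3.2, e4.1, e4.2, e5.1, e5.2]
  have e6 := k6.trans (small _ _ hsum)
  rw [abs_le] at e6 hsum ⊢
  constructor <;> linarith [e6.1, e6.2, hsum.1, hsum.2]

theorem sloppy_w_bound
    (p : ℕ) (hp : 6 ≤ p) (u : ℝ) (hu : u = (2 : ℝ) ^ (1 - (p : ℤ)))
    (ox oy : ℝ) (hox1 : 1 ≤ ox) (hox2 : ox ≤ 1 / (8 * u) - 2)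
    (hoy1 : 1 ≤ oy) (hoy2 : oy ≤ 1 / (8 * u) - 2)
    (xh xl yh yl : ℝ)
    (hxh : xh ∈ Fp p) (hxl : xl ∈ Fp p) (hyh : yh ∈ Fp p) (hyl : yl ∈ Fp p)
    (hovx : |xl| ≤ ox * u * |xh|) (hovy : |yl| ≤ oy * u * |yh|)
    (sh a' b' da db sl v w zh d zl : ℝ)
    (hrun : SloppyFaithful p xh xl yh yl sh a' b' da db sl v w zh d zl) :
    |w| ≤ (max ox oy + 2) * u * (|xh| + |yh|) := by
  have hp1 : 1 ≤ p := by omega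
  have hu0 : 0 < u := by rw [hu]; positivity
  have hu32 : u ≤ 1 / 32 := by
    rw [hu]
    calc (2 : ℝ) ^ (1 - (p : ℤ)) ≤ 2 ^ (-5 : ℤ) :=
          zpow_le_zpow_right₀ (by norm_num) (by omega)
      _ = 1 / 32 := by norm_num
  obtain ⟨hs, ha, hb, hda, hdb, hsl, hv, hw, -⟩ := hrun
  have low := twoSum_low_bound hp1 hu hu32 hxh hyh hs ha hb hda hdb hsl
  have kv := hv.abs_sub_le hp1
  have kw := hw.abs_sub_le hp1
  rw [← hu] at kv kw
  obtain ⟨o, ho⟩ : ∃ o, o = max ox oy := ⟨_, rfl⟩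
  have hox : ox ≤ o := ho ▸ le_max_left _ _
  have hoy : oy ≤ o := ho ▸ le_max_right _ _
  have ho0 : 0 ≤ o := by linarith
  have hou : o * u ≤ 1 / 8 - 2 * u := by
    have h : o ≤ 1 / (8 * u) - 2 := ho ▸ max_le hox2 hoy2
    have h' := mul_le_mul_of_nonneg_right h hu0.le
    have : (1 / (8 * u) - 2) * u = 1 / 8 - 2 * u := by field_simp
    linarith
  rw [← ho]
  obtain ⟨T, hT⟩ : ∃ T, T = u * (|xh| + |yh|) := ⟨_, rfl⟩
  have hT0 : 0 ≤ T := by rw [hT]; positivity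
  rw [← hT] at low
  rw [mul_assoc, ← hT]
  have hl : |xl + yl| ≤ o * T := by
    have h1 : |xl| ≤ o * u * |xh| := hovx.trans (by gcongr)
    have h2 : |yl| ≤ o * u * |yh| := hovy.trans (by gcongr)
    have := abs_add_le xl yl
    rw [hT]; linarith
  have round : ∀ {t r c : ℝ}, |r - t| ≤ u * |t| → |t| ≤ c → |r| ≤ (1 + u) * c := by
    intro t r c h1 h2
    have h3 := abs_add_le (r - t) t
    rw [sub_add_cancel] at h3
    have := mul_le_mul_of_nonneg_left h2 hu0.le
    linarith
  have bv := round kv hl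
  have bw := round kw ((abs_add_le sl v).trans (add_le_add low bv))
  refine bw.trans ?_
  have hcoef : (1 + u) * (1.7 + (1 + u) * o) ≤ o + 2 := by
    have h := mul_le_mul_of_nonneg_right hou (show 0 ≤ 2 + u by linarith)
    nlinarith [sq_nonneg u]
  have := mul_le_mul_of_nonneg_right hcoef hT0
  linarith
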